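/- Let X be a set, κ an infinite cardinal, and S a subsemigroup of I_X. Write S⁻¹ = {f⁻¹ : f ∈ S}. Then exactly one of the following holds: (i) S ≈_κ S⁻¹ ≈_κ ⟨S ∪ S⁻¹⟩ (the subsemigroup generated by S ∪ S⁻¹); (ii) S and S⁻¹ are incomparable under ≼_κ (neither S ≼_κ S⁻¹ nor S⁻¹ ≼_κ S), and neither S nor S⁻¹ is ≈_κ-equivalent to any inverse subsemigroup of I_X. -/

import Mathlib

open Set Cardinal

universe u

/-- A chart on `X` (an element of the symmetric inverse monoid `I_X`): a partial
bijection between subsets of `X`, encoded as a functional, injective relation,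
i.e. a set of pairs. -/
structure Chart (X : Type u) : Type u where
  rel : Set (X × X)
  functional : ∀ ⦃x y y'⦄, (x, y) ∈ rel → (x, y') ∈ rel → y = y'
  injective : ∀ ⦃x x' y⦄, (x, y) ∈ rel → (x', y) ∈ rel → x = x'

namespace Chart

variable {X : Type u}

/-- Composition of charts: compose wherever possible. -/
instance : Mul (Chart X) :=
  ⟨fun f g =>
    { rel := {p | ∃ y, (p.1, y) ∈ f.rel ∧ (y, p.2) ∈ g.rel}
      functional := by
        rintro x y y' ⟨z, hz1, hz2⟩ ⟨w, hw1, hw2⟩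
        obtain rfl : z = w := f.functional hz1 hw1
        exact g.functional hz2 hw2
      injective := by
        rintro x x' y ⟨z, hz1, hz2⟩ ⟨w, hw1, hw2⟩
        obtain rfl : z = w := g.injective hz2 hw2
        exact f.injective hz1 hw1 }⟩

/-- The inverse chart. -/
instance : Inv (Chart X) :=
  ⟨fun f =>
    { rel := {p | (p.2, p.1) ∈ f.rel}
      functional := fun _ _ _ h h' => f.injective h h'
      injective := fun _ _ _ h h' => f.functional h h' }⟩

/-- The domain of a chart. -/
def dom (f : Chart X) : Set X := {x | ∃ y, (x, y) ∈ f.rel}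

/-- The range (image) of a chart. -/
def ran (f : Chart X) : Set X := {y | ∃ x, (x, y) ∈ f.rel}

end Chart

/-- Membership in the subsemigroup of `I_X` generated by a set of charts. -/
inductive InGen {X : Type u} (S : Set (Chart X)) : Chart X → Prop
  | base {f : Chart X} : f ∈ S → InGen S f
  | mul {f g : Chart X} : InGen S f → InGen S g → InGen S (f * g)

/-- The subsemigroup of `I_X` generated by a set of charts. -/
def Sgen {X : Type u} (S : Set (Chart X)) : Set (Chart X) := {f | InGen S f}

/-- The Bergman–Shelah preorder `S ≼ T` on subsets of `I_X`: there is a countable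
subset `U ⊆ I_X` with `S` contained in the subsemigroup generated by `T ∪ U`. -/
def BSleq {X : Type u} (S T : Set (Chart X)) : Prop :=
  ∃ U : Set (Chart X), U.Countable ∧ S ⊆ Sgen (T ∪ U)

/-- Bergman–Shelah equivalence `S ≈ T`. -/
def BSequiv {X : Type u} (S T : Set (Chart X)) : Prop := BSleq S T ∧ BSleq T S

/-- The Bergman–Shelah preorder relative to a cardinal `κ`: `S ≼_κ T` iff there is
`U ⊆ I_X` with `|U| < κ` and `S` contained in the subsemigroup generated by `T ∪ U`. -/
def BSleqC {X : Type u} (κ : Cardinal.{u}) (S T : Set (Chart X)) : Prop :=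
  ∃ U : Set (Chart X), #↥U < κ ∧ S ⊆ Sgen (T ∪ U)

/-- Bergman–Shelah equivalence relative to a cardinal `κ`. -/
def BSequivC {X : Type u} (κ : Cardinal.{u}) (S T : Set (Chart X)) : Prop :=
  BSleqC κ S T ∧ BSleqC κ T S

/-- A chart is a permutation of `X` if it is everywhere defined and surjective. -/
def IsPermChart {X : Type u} (f : Chart X) : Prop :=
  (∀ x : X, ∃ y, (x, y) ∈ f.rel) ∧ ∀ y : X, ∃ x, (x, y) ∈ f.rel

/-- The partwise stabiliser of a family of subsets of `X`: all permutations of `X`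
mapping each member of the family onto itself. -/
def PStab {X : Type u} (P : Set (Set X)) : Set (Chart X) :=
  {f | IsPermChart f ∧ ∀ B ∈ P, {y | ∃ x ∈ B, (x, y) ∈ f.rel} = B}

/-- A subset of `I_X` closed under composition. -/
def IsSubsemigroup {X : Type u} (S : Set (Chart X)) : Prop :=
  ∀ f ∈ S, ∀ g ∈ S, f * g ∈ S

/-- A subsemigroup of `I_X` closed under inversion. -/
def IsInverseSubsemigroup {X : Type u} (S : Set (Chart X)) : Prop :=
  IsSubsemigroup S ∧ ∀ f ∈ S, f⁻¹ ∈ S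

/-- The orbit of a point under a set of charts: `{x} ∪ {xf : f ∈ M, x ∈ dom f}`. -/
def ChartOrbit {X : Type u} (M : Set (Chart X)) (x : X) : Set X :=
  insert x {y | ∃ f ∈ M, (x, y) ∈ f.rel}

/-- The cone of a point under a set of charts: `{xs : s ∈ S, x ∈ dom s}`. -/
def ChartCone {X : Type u} (S : Set (Chart X)) (x : X) : Set X :=
  {y | ∃ f ∈ S, (x, y) ∈ f.rel}

/-- The semilattice of idempotents of `I_X`: the partial identity charts. -/
def EX (X : Type u) : Set (Chart X) := {f | ∀ x y : X, (x, y) ∈ f.rel → y = x}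

/-- A `κ`-uniform partition: every part has cardinality `κ`. -/
def IsUniformPartition {X : Type u} (κ : Cardinal.{u}) (P : Set (Set X)) : Prop :=
  Setoid.IsPartition P ∧ ∀ B ∈ P, #↥B = κ

/-- A `κ`-unbounded partition: all parts have cardinality `< κ` but no cardinal
`c < κ` bounds the cardinalities of all parts. -/
def IsUnboundedPartition {X : Type u} (κ : Cardinal.{u}) (P : Set (Set X)) : Prop :=
  Setoid.IsPartition P ∧ (∀ B ∈ P, #↥B < κ) ∧ ¬∃ c < κ, ∀ B ∈ P, #↥B ≤ c

/-- A `κ`-bounded partition: some cardinal `c < κ` bounds the cardinalities of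
all parts. -/
def IsBoundedPartition {X : Type u} (κ : Cardinal.{u}) (P : Set (Set X)) : Prop :=
  Setoid.IsPartition P ∧ ∃ c < κ, ∀ B ∈ P, #↥B ≤ c

/-- A rooted tree on (a subset of) `X`, encoded via its parent function: every
vertex reaches the root by finitely many applications of `par`. -/
structure RTree (X : Type u) : Type u where
  verts : Set X
  root : X
  root_mem : root ∈ verts
  par : X → X
  par_mem : ∀ x ∈ verts, par x ∈ verts
  par_root : par root = root
  par_reaches : ∀ x ∈ verts, ∃ n : ℕ, par^[n] x = root

namespace RTree

variable {X : Type u}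

/-- `T.anc x y` : `x` is an ancestor of `y` (or `x = y`), i.e. `x` lies on the
rooted path to `y`. -/
def anc (T : RTree X) (x y : X) : Prop := ∃ n : ℕ, T.par^[n] y = x

/-- The level of a vertex: its distance to the root. -/
noncomputable def level (T : RTree X) (x : X) : ℕ := sInf {n : ℕ | T.par^[n] x = T.root}

/-- The children of a vertex. -/
def children (T : RTree X) (x : X) : Set X :=
  {y | y ∈ T.verts ∧ T.par y = x ∧ y ≠ x}

/-- The neighbours of a vertex in the tree (its children together with its
parent, if the vertex is not the root); the degree of the vertex is the size
of this set. -/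
def nbhd (T : RTree X) (x : X) : Set X :=
  {y | y ∈ T.verts ∧ ((T.par y = x ∧ y ≠ x) ∨ (T.par x = y ∧ x ≠ y))}

/-- `P` is the vertex set of a (finite or infinite) path of `T` starting at the
root: a nonempty set of vertices closed under taking parents and linearly
ordered by ancestry. -/
def IsRootedPath (T : RTree X) (P : Set X) : Prop :=
  P.Nonempty ∧ P ⊆ T.verts ∧ (∀ x ∈ P, T.par x ∈ P) ∧
    ∀ x ∈ P, ∀ y ∈ P, T.anc x y ∨ T.anc y x

end RTree

/-- `T'` is a subtree of `T`: a rooted tree on a subset of the vertices of `T`,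
with the same root and the same parent relation. -/
def IsSubtree {X : Type u} (T' T : RTree X) : Prop :=
  T'.verts ⊆ T.verts ∧ T'.root = T.root ∧ ∀ x ∈ T'.verts, T'.par x = T.par x

/-- `Q` is a quasi-subtree of `T`: a rooted tree on a subset of the vertices of
`T` preserving the ancestry relation and the levels of `T`. -/
def IsQuasiSubtree {X : Type u} (Q T : RTree X) : Prop :=
  Q.verts ⊆ T.verts ∧
    (∀ x ∈ Q.verts, ∀ y ∈ Q.verts, (Q.anc x y ↔ T.anc x y)) ∧
    ∀ x ∈ Q.verts, ∀ y ∈ Q.verts, (Q.level x = Q.level y ↔ T.level x = T.level y)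

/-- Isomorphism of rooted trees: a bijection of the vertex sets mapping root to
root and commuting with the parent functions. -/
def RTreeIso {X : Type u} {Y : Type u} (T : RTree X) (R : RTree Y) : Prop :=
  ∃ φ : X → Y, Set.BijOn φ T.verts R.verts ∧ φ T.root = R.root ∧
    ∀ x ∈ T.verts, φ (T.par x) = R.par (φ x)

/-- The semigroup `𝒮(T)` of path-bijections of a rooted tree `T`: charts whose
domain and range are vertex sets of rooted paths and which preserve levels. -/
def pathSg {X : Type u} (T : RTree X) : Set (Chart X) :=
  {f | (∃ P, T.IsRootedPath P ∧ Chart.dom f = P) ∧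
    (∃ Q, T.IsRootedPath Q ∧ Chart.ran f = Q) ∧
    ∀ x y : X, (x, y) ∈ f.rel → T.level y = T.level x}

/- The involution reverses products and preserves cardinalities, so `S ≼ T` gives `S⋆ ≼ T⋆`. Hence
`S ≼ S⋆` and `S⋆ ≼ S` are equivalent, and then either of `S`, `S⋆` generates the other, and so also
`⟨S ∪ S⋆⟩`, modulo fewer than `κ` elements. If `S ≈ M = M⋆`, then `S ≼ M = M⋆ ≼ S⋆`, and
likewise for `S⋆`, so in the incomparable case neither `S` nor `S⋆` is equivalent to such an `M`. -/

open scoped Pointwise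
open Subsemigroup (closure closure_le closure_mono subset_closure)

section Mul

variable {A : Type u} [Mul A]

/-- The Bergman–Shelah preorder `S ≼_κ T` on the subsets of a magma: `S` lies in the subsemigroup
generated by `T` together with fewer than `κ` further elements. The equivalence `≈_κ` is
`AntisymmRel (BergmanShelahLE κ)`. -/
def BergmanShelahLE (κ : Cardinal.{u}) (S T : Set A) : Prop :=
  ∃ U : Set A, #U < κ ∧ S ⊆ closure (T ∪ U)

namespace BergmanShelahLE

variable {κ : Cardinal.{u}} {S T R : Set A}

theorem of_subset (hκ : 0 < κ) (h : S ⊆ T) : BergmanShelahLE κ S T :=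
  ⟨∅, by rwa [mk_eq_zero], (h.trans subset_union_left).trans subset_closure⟩

theorem trans (hκ : ℵ₀ ≤ κ) (hST : BergmanShelahLE κ S T) (hTR : BergmanShelahLE κ T R) :
    BergmanShelahLE κ S R := by
  obtain ⟨U, hU, hSU⟩ := hST
  obtain ⟨V, hV, hTV⟩ := hTR
  refine ⟨V ∪ U, (mk_union_le V U).trans_lt (add_lt_of_lt hκ hV hU), hSU.trans ?_⟩
  rw [← union_assoc]
  exact closure_le.2 <| union_subset (hTV.trans (closure_mono subset_union_left))
    (subset_union_right.trans subset_closure)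

theorem closure_union_self (h : BergmanShelahLE κ S T) : BergmanShelahLE κ (closure (S ∪ T)) T := by
  obtain ⟨U, hU, hSU⟩ := h
  exact ⟨U, hU, closure_le.2 (union_subset hSU (subset_union_left.trans subset_closure))⟩

end BergmanShelahLE

end Mul

section StarMul

variable {A : Type u} [Mul A] [StarMul A] {κ : Cardinal.{u}} {S T M : Set A}

theorem star_mem_closure_star {a : A} (ha : a ∈ closure S) : star a ∈ closure (star S) := by
  induction ha using Subsemigroup.closure_induction with
  | mem a ha => exact subset_closure (star_mem_star.2 ha)
  | mul a b _ _ ha hb => rw [star_mul]; exact mul_mem hb ha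

theorem BergmanShelahLE.star (h : BergmanShelahLE κ S T) :
    BergmanShelahLE κ (star S) (star T) := by
  obtain ⟨U, hU, hSU⟩ := h
  refine ⟨Star.star U, ?_, ?_⟩
  · rw [← image_star]
    exact mk_image_le.trans_lt hU
  · rw [← union_star, ← image_star, image_subset_iff]
    exact fun a ha ↦ star_mem_closure_star (hSU ha)

theorem bergmanShelahLE_star_comm : BergmanShelahLE κ (star S) T ↔ BergmanShelahLE κ S (star T) :=
  ⟨fun h ↦ by simpa only [star_star] using h.star, fun h ↦ by simpa only [star_star] using h.star⟩

theorem bergmanShelahLE_star_self_of_antisymmRel (hκ : ℵ₀ ≤ κ)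
    (h : AntisymmRel (BergmanShelahLE κ) S M) (hM : star M = M) : BergmanShelahLE κ S (star S) :=
  h.left.trans hκ (hM ▸ h.right.star)

theorem antisymmRel_star_and_closure_iff (hκ : 0 < κ) :
    AntisymmRel (BergmanShelahLE κ) S (star S) ∧
      AntisymmRel (BergmanShelahLE κ) (star S) (closure (S ∪ star S)) ↔
    BergmanShelahLE κ S (star S) :=
  ⟨fun h ↦ h.1.left, fun h ↦ ⟨⟨h, bergmanShelahLE_star_comm.2 h⟩,
    .of_subset hκ (subset_union_right.trans subset_closure), h.closure_union_self⟩⟩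

theorem not_bergmanShelahLE_star_and_forall_not_antisymmRel_iff (hκ : ℵ₀ ≤ κ) :
    ((¬ BergmanShelahLE κ S (star S) ∧ ¬ BergmanShelahLE κ (star S) S) ∧
      ∀ M : Subsemigroup A, star (M : Set A) = M →
        ¬ AntisymmRel (BergmanShelahLE κ) S M ∧ ¬ AntisymmRel (BergmanShelahLE κ) (star S) M) ↔
    ¬ BergmanShelahLE κ S (star S) := by
  refine ⟨fun h ↦ h.1.1, fun h ↦ ⟨⟨h, mt bergmanShelahLE_star_comm.1 h⟩, fun M hM ↦ ⟨fun hSM ↦ ?_,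
    fun hSM ↦ ?_⟩⟩⟩
  · exact h (bergmanShelahLE_star_self_of_antisymmRel hκ hSM hM)
  · have hS : BergmanShelahLE κ (star S) (star (star S)) :=
      bergmanShelahLE_star_self_of_antisymmRel hκ hSM hM
    rw [star_star] at hS
    exact h (bergmanShelahLE_star_comm.1 hS)

theorem stmt17_general (hκ : ℵ₀ ≤ κ) (S : Set A) :
    Xor
      (AntisymmRel (BergmanShelahLE κ) S (star S) ∧
        AntisymmRel (BergmanShelahLE κ) (star S) (closure (S ∪ star S)))
      ((¬ BergmanShelahLE κ S (star S) ∧ ¬ BergmanShelahLE κ (star S) S) ∧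
        ∀ M : Subsemigroup A, star (M : Set A) = M →
          ¬ AntisymmRel (BergmanShelahLE κ) S M ∧
            ¬ AntisymmRel (BergmanShelahLE κ) (star S) M) := by
  rw [antisymmRel_star_and_closure_iff (aleph0_pos.trans_le hκ),
    not_bergmanShelahLE_star_and_forall_not_antisymmRel_iff hκ, xor_not_right]

end StarMul

section Chart

variable {X : Type u}

attribute [ext] Chart

/-- `star` is inversion of charts. Mathlib's `mul_inv_rev` needs a `DivisionMonoid`, in which
`f * g = 1` forces `f⁻¹ = g`; this fails in `I_X`, where `g` may properly extend `f⁻¹`. -/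
instance : StarMul (Chart X) where
  star := Inv.inv
  star_involutive _ := rfl
  star_mul _ _ := Chart.ext <| Set.ext fun _ ↦ exists_congr fun _ ↦ and_comm

theorem image_inv_eq_star (S : Set (Chart X)) : Inv.inv '' S = star S :=
  image_star

theorem sgen_eq_closure (S : Set (Chart X)) : Sgen S = closure S := by
  ext f
  constructor
  · intro hf
    induction hf with
    | base hf => exact subset_closure hf
    | mul _ _ hf hg => exact mul_mem hf hg
  · intro hf
    induction hf using Subsemigroup.closure_induction with
    | mem _ hf => exact .base hf
    | mul _ _ _ _ hf hg => exact .mul hf hg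

theorem bSleqC_eq_bergmanShelahLE (κ : Cardinal.{u}) :
    BSleqC (X := X) κ = BergmanShelahLE κ := by
  simp only [funext_iff, BSleqC, BergmanShelahLE, sgen_eq_closure, implies_true]

theorem bSequivC_eq_antisymmRel (κ : Cardinal.{u}) :
    BSequivC (X := X) κ = AntisymmRel (BergmanShelahLE κ) := by
  rw [← bSleqC_eq_bergmanShelahLE]
  rfl

theorem isInverseSubsemigroup_iff {M : Set (Chart X)} :
    IsInverseSubsemigroup M ↔
      ∃ N : Subsemigroup (Chart X), star (N : Set (Chart X)) = N ∧ N = M := by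
  constructor
  · rintro ⟨hmul, hinv⟩
    exact ⟨⟨M, fun {f g} hf hg ↦ hmul f hf g hg⟩, Subset.antisymm (star_subset.2 hinv) hinv, rfl⟩
  · rintro ⟨N, hN, rfl⟩
    exact ⟨fun f hf g hg ↦ mul_mem hf hg, fun f hf ↦ hN.ge hf⟩

end Chart

/-- for any infinite cardinal `κ` and any subsemigroup `S` of
`I_X`, exactly one of the following holds: (i) `S ≈_κ S⁻¹ ≈_κ ⟨S ∪ S⁻¹⟩`;
(ii) `S` and `S⁻¹` are `≼_κ`-incomparable and neither is `≈_κ`-equivalent to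
any inverse subsemigroup of `I_X`. -/
theorem stmt17 {X : Type u} (κ : Cardinal.{u}) (hκ : ℵ₀ ≤ κ)
    (S : Set (Chart X)) (hS : IsSubsemigroup S) :
    Xor'
      (BSequivC κ S (Inv.inv '' S) ∧
        BSequivC κ (Inv.inv '' S) (Sgen (S ∪ Inv.inv '' S)))
      ((¬ BSleqC κ S (Inv.inv '' S) ∧ ¬ BSleqC κ (Inv.inv '' S) S) ∧
        ∀ M : Set (Chart X), IsInverseSubsemigroup M →
          ¬ BSequivC κ S M ∧ ¬ BSequivC κ (Inv.inv '' S) M) := by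
  change Xor _ _
  simpa only [bSequivC_eq_antisymmRel, bSleqC_eq_bergmanShelahLE, sgen_eq_closure,
    image_inv_eq_star, isInverseSubsemigroup_iff, forall_exists_index, and_imp,
    forall_apply_eq_imp_iff₂] using stmt17_general hκ S
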